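/- arXiv:2108.07490 — 2 statements merged into one kernel-verified Lean document; each statement's English description precedes it below -/
import Mathlib

section
/- Let α ∈ (0,1) and λ > 0, and define u : ℝ → ℝ → ℝ by u(t, x) = √(α/(4·π·λ·t^α)) · exp(−(α/(4·λ·t^α))·x²) for t > 0. Then for every t > 0 and every x ∈ ℝ, u satisfies the conformable time-fractional diffusion equation in the form t^{1−α} · ∂u/∂t (t, x) = λ · ∂²u/∂x² (t, x), where ∂u/∂t (t, x) = deriv (fun s => u s x) t and ∂²u/∂x² (t, x) = deriv (deriv (fun y => u t y)) x. -/
open Real Filter Topology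

/-- The function `u (t, x) = √(α/(4πλt^α)) * exp (-(α/(4λt^α)) * x²)` satisfies
the conformable time-fractional diffusion equation in the form
`t ^ (1 - α) * ∂u/∂t = λ * ∂²u/∂x²` for all `t > 0` and `x ∈ ℝ`. -/
theorem conformable_diffusion_analytic_solution
    (α lam : ℝ) (hα : α ∈ Set.Ioo (0 : ℝ) 1) (hlam : 0 < lam)
    (u : ℝ → ℝ → ℝ)
    (hu : ∀ t x : ℝ, 0 < t →
      u t x = Real.sqrt (α / (4 * π * lam * t ^ α)) *
        Real.exp (-(α / (4 * lam * t ^ α)) * x ^ 2)) :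
    ∀ t x : ℝ, 0 < t →
      t ^ (1 - α) * deriv (fun s => u s x) t
        = lam * deriv (deriv (fun y => u t y)) x := by
  intro t x ht
  obtain ⟨hα0, hα1⟩ := hα
  have hB : 0 < t ^ α := Real.rpow_pos_of_pos ht α
  have hBd : HasDerivAt (fun s : ℝ => s ^ α) (α * t ^ (α - 1)) t :=
    Real.hasDerivAt_rpow_const (Or.inl ht.ne')
  have hprod : t ^ (1 - α) * t ^ (α - 1) = 1 := by
    rw [← Real.rpow_add ht]; simp
  have hpi := Real.pi_pos
  have hDpos : 0 < α / (4 * π * lam * t ^ α) := by positivity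
  -- space derivatives
  have hspace : ∀ (A c : ℝ), deriv (deriv (fun y : ℝ => A * Real.exp (-c * y ^ 2))) x
      = A * Real.exp (-c * x ^ 2) * (4 * c ^ 2 * x ^ 2 - 2 * c) := by
    intro A c
    have h0 : ∀ y : ℝ, HasDerivAt (fun y : ℝ => Real.exp (-c * y ^ 2))
        (Real.exp (-c * y ^ 2) * (-c * (2 * y))) y := by
      intro y
      have h := (((hasDerivAt_id y).pow 2).const_mul (-c)).exp
      convert h using 1
      all_goals simp
    have h1 : deriv (fun y : ℝ => A * Real.exp (-c * y ^ 2))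
        = fun y => A * (Real.exp (-c * y ^ 2) * (-c * (2 * y))) := by
      funext y
      exact ((h0 y).const_mul A).deriv
    rw [h1]
    have h2 : HasDerivAt (fun y : ℝ => -c * (2 * y)) (-c * (2 * 1)) x :=
      ((hasDerivAt_id x).const_mul 2).const_mul (-c)
    have h3 := (((h0 x).mul h2).const_mul A).deriv
    refine Eq.trans h3 ?_
    ring
  have hR : (fun y => u t y) = fun y => Real.sqrt (α / (4 * π * lam * t ^ α)) *
        Real.exp (-(α / (4 * lam * t ^ α)) * y ^ 2) := by
    funext y; exact hu t y ht
  have hL : (fun s => u s x) =ᶠ[𝓝 t] fun s => Real.sqrt (α / (4 * π * lam * s ^ α)) *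
        Real.exp (-(α / (4 * lam * s ^ α)) * x ^ 2) := by
    filter_upwards [lt_mem_nhds ht] with s hs
    exact hu s x hs
  rw [hR, hspace, hL.deriv_eq]
  have hD1 := ((hasDerivAt_const t α).div (hBd.const_mul (4 * π * lam)) (by positivity)).sqrt
    hDpos.ne'
  have hE1 := ((((hasDerivAt_const t α).div (hBd.const_mul (4 * lam))
    (by positivity)).neg).mul_const (x ^ 2)).exp
  have hT := (hD1.mul hE1).deriv
  refine (congrArg (fun z => t ^ (1 - α) * z) hT).trans ?_
  simp only [Pi.div_apply, Pi.neg_apply]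
  have hS : 0 < Real.sqrt (α / (4 * π * lam * t ^ α)) := Real.sqrt_pos.mpr hDpos
  have hSS := Real.sq_sqrt hDpos.le
  generalize Real.sqrt (α / (4 * π * lam * t ^ α)) = S at *
  generalize Real.exp (-(α / (4 * lam * t ^ α)) * x ^ 2) = E at *
  generalize t ^ α = B at *
  generalize t ^ (α - 1) = q at *
  generalize t ^ (1 - α) = p at *
  have hder : (0 * (4 * π * lam * B) - α * (4 * π * lam * (α * q))) / (4 * π * lam * B) ^ 2
      / (2 * S) = - S * (α * q) / (2 * B) := by
    have : (0 * (4 * π * lam * B) - α * (4 * π * lam * (α * q))) / (4 * π * lam * B) ^ 2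
      = - S ^ 2 * (α * q) / B := by
      rw [hSS]; field_simp; ring
    rw [this]; field_simp
  rw [hder]
  have hq : q = 1 / p := by
    have : p ≠ 0 := by rintro rfl; simp at hprod
    field_simp; linarith
  have hp : p ≠ 0 := by rintro rfl; simp at hprod
  subst hq
  field_simp
  ring
end

section
/- Let α ∈ (0,1) and λ > 0, and define u : ℝ → ℝ → ℝ by u(t, x) = √(α/(4·π·λ·t^α)) · exp(−(α/(4·λ·t^α))·x²) for t > 0. Then for every t > 0 and every x ∈ ℝ, the conformable fractional derivative of order α of s ↦ u(s, x) at t exists and equals λ · ∂²u/∂x² (t, x); that is, (u(t + ε·t^{1−α}, x) − u(t, x))/ε tends to λ · deriv (deriv (fun y => u t y)) x as ε tends to 0 (through nonzero values). -/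
open Real Filter Topology

/-- For the analytical solution
`u (t, x) = √(α/(4πλt^α)) * exp (-(α/(4λt^α)) * x²)` of the conformable
time-fractional diffusion equation, the conformable fractional derivative of
order `α` of `s ↦ u (s, x)` at any `t > 0` exists and equals
`λ * ∂²u/∂x² (t, x)`. -/
theorem conformable_deriv_of_analytic_solution
    (α lam : ℝ) (hα : α ∈ Set.Ioo (0 : ℝ) 1) (hlam : 0 < lam)
    (u : ℝ → ℝ → ℝ)
    (hu : ∀ t x : ℝ, 0 < t →
      u t x = Real.sqrt (α / (4 * π * lam * t ^ α)) *
        Real.exp (-(α / (4 * lam * t ^ α)) * x ^ 2)) :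
    ∀ t x : ℝ, 0 < t →
      Tendsto (fun ε : ℝ => (u (t + ε * t ^ (1 - α)) x - u t x) / ε) (𝓝[≠] 0)
        (𝓝 (lam * deriv (deriv (fun y => u t y)) x)) := by
  obtain ⟨hα0, hα1⟩ := hα
  intro t x ht
  have hT : 0 < t ^ α := Real.rpow_pos_of_pos ht α
  have hpi := Real.pi_pos
  -- the spatial derivatives
  have hfun : (fun y => u t y) = fun y => Real.sqrt (α / (4 * π * lam * t ^ α)) *
        Real.exp (-(α / (4 * lam * t ^ α)) * y ^ 2) := funext fun y => hu t y ht
  have key : ∀ S a : ℝ, deriv (deriv (fun y : ℝ => S * Real.exp (-a * y ^ 2))) x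
      = S * Real.exp (-a * x ^ 2) * (4 * a ^ 2 * x ^ 2 - 2 * a) := by
    intro S a
    have hE : ∀ y : ℝ, HasDerivAt (fun y : ℝ => Real.exp (-a * y ^ 2))
        (Real.exp (-a * y ^ 2) * (-a * (2 * y))) y := by
      intro y
      have h := (((hasDerivAt_id y).pow 2).const_mul (-a)).exp
      convert h using 1 <;> simp
    have h1 : deriv (fun y : ℝ => S * Real.exp (-a * y ^ 2))
        = fun y => S * (Real.exp (-a * y ^ 2) * (-a * (2 * y))) :=
      funext fun y => ((hE y).const_mul S).deriv
    rw [h1]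
    have h2 := ((hE x).mul (((hasDerivAt_id x).const_mul 2).const_mul (-a))).const_mul S
    refine (h2.deriv).trans ?_
    simp only [id]
    ring
  rw [hfun, key]
  -- the time derivative
  have hg : HasDerivAt (fun ε : ℝ => (t + ε * t ^ (1 - α)) ^ α) α 0 := by
    have h0 : HasDerivAt (fun ε : ℝ => t + ε * t ^ (1 - α)) (t ^ (1 - α)) 0 := by
      simpa using ((hasDerivAt_id (0:ℝ)).mul_const (t ^ (1 - α))).const_add t
    have h := h0.rpow_const (p := α) (Or.inl (by simpa using ht.ne'))
    convert h using 1
    have : t ^ (1 - α) * t ^ (α - 1) = 1 := by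
      rw [← Real.rpow_add ht]; simp
    simp only [zero_mul, add_zero]
    linear_combination (-α) * this
  have hg0 : (t + 0 * t ^ (1 - α)) ^ α = t ^ α := by simp
  set g : ℝ → ℝ := fun ε : ℝ => (t + ε * t ^ (1 - α)) ^ α with hgdef
  have hg0' : g 0 = t ^ α := hg0
  clear_value g
  generalize hTT : t ^ α = T at *
  have hS : HasDerivAt (fun ε => Real.sqrt (α / (4 * π * lam * g ε)))
      (Real.sqrt (α / (4 * π * lam * T)) * (-α / (2 * T))) 0 := by
    have hd : HasDerivAt (fun ε => α / (4 * π * lam * g ε))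
        ((0 * (4 * π * lam * T) - α * (4 * π * lam * α)) / (4 * π * lam * T) ^ 2) 0 := by
      have h := (hasDerivAt_const (0:ℝ) α).div (hg.const_mul (4 * π * lam))
        (by rw [hg0']; positivity)
      rw [hg0'] at h
      exact h
    have h := hd.sqrt (by rw [hg0']; positivity)
    rw [hg0'] at h
    refine h.congr_deriv (Eq.symm ?_)
    have hp : 0 < α / (4 * π * lam * T) := by positivity
    have hs := Real.sqrt_pos.2 hp
    have hq := Real.sq_sqrt hp.le
    rw [eq_div_iff (by positivity)]
    calc _ = (Real.sqrt (α / (4 * π * lam * T))) ^ 2 * (-α / T) := by field_simp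
      _ = _ := by rw [hq]; field_simp; ring
  have hE : HasDerivAt (fun ε => Real.exp (-(α / (4 * lam * g ε)) * x ^ 2))
      (Real.exp (-(α / (4 * lam * T)) * x ^ 2) * (α ^ 2 / (4 * lam * T ^ 2) * x ^ 2)) 0 := by
    have hd : HasDerivAt (fun ε => α / (4 * lam * g ε))
        ((0 * (4 * lam * T) - α * (4 * lam * α)) / (4 * lam * T) ^ 2) 0 := by
      have h := (hasDerivAt_const (0:ℝ) α).div (hg.const_mul (4 * lam))
        (by rw [hg0']; positivity)
      rw [hg0'] at h
      exact h
    have h : HasDerivAt (fun ε => Real.exp (-(α / (4 * lam * g ε)) * x ^ 2))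
        (Real.exp (-(α / (4 * lam * g 0)) * x ^ 2) *
          (-((0 * (4 * lam * T) - α * (4 * lam * α)) / (4 * lam * T) ^ 2) * x ^ 2)) 0 :=
      (hd.neg.mul_const (x ^ 2)).exp
    rw [hg0'] at h
    refine h.congr_deriv ?_
    congr 1
    field_simp
    ring
  have hU := hS.mul hE
  have hlim := hU.tendsto_slope
  have hval : lam * (Real.sqrt (α / (4 * π * lam * T)) *
      Real.exp (-(α / (4 * lam * T)) * x ^ 2) *
        (4 * (α / (4 * lam * T)) ^ 2 * x ^ 2 - 2 * (α / (4 * lam * T)))) =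
      Real.sqrt (α / (4 * π * lam * T)) * (-α / (2 * T)) *
        Real.exp (-(α / (4 * lam * g 0)) * x ^ 2) +
      Real.sqrt (α / (4 * π * lam * g 0)) *
        (Real.exp (-(α / (4 * lam * T)) * x ^ 2) * (α ^ 2 / (4 * lam * T ^ 2) * x ^ 2)) := by
    rw [hg0']
    generalize Real.sqrt (α / (4 * π * lam * T)) = S
    generalize Real.exp (-(α / (4 * lam * T)) * x ^ 2) = E
    field_simp
    ring
  rw [hval]
  refine hlim.congr' ?_
  have hpos : ∀ᶠ ε : ℝ in 𝓝[≠] 0, 0 < t + ε * t ^ (1 - α) := by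
    apply Filter.Eventually.filter_mono nhdsWithin_le_nhds
    have hc : ContinuousAt (fun ε : ℝ => t + ε * t ^ (1 - α)) 0 := by fun_prop
    exact hc.eventually (lt_mem_nhds (by simpa using ht))
  filter_upwards [hpos] with ε hε
  rw [slope_def_field, hu _ x hε, hu t x ht, hTT]
  simp only [Pi.mul_apply, hg0', sub_zero]
  rw [hgdef]
end
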